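/- arXiv:hep-th/9308132 — 2 statements merged into one kernel-verified Lean document; each statement's English description precedes it below -/
import Mathlib

section
/- The combined Fourier transform of differential forms intertwines the de Rham differential with the Koszul differential: 𝓕 ∘ d = δ ∘ 𝓕 as maps from 𝒮(ℝ^n) ⊗ Λ((ℝ^n)*) to 𝒮((ℝ^n)*) ⊗ Λ(ℝ^n). -/
/-!
STATEMENT 9.  Context: differential forms on `V = ℝⁿ` with Schwartz coefficients
are `Ωs = 𝒮(ℝⁿ, ℂ) ⊗ Λ(V*)` (generators `lamGen j = ψ^j = dz^j`), and on the dual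
side `𝒮(V*, ℂ) ⊗ Λ(V)` (generators `ψ̄_j`); both exterior factors are modeled by
`Lam n`.  `dRham = Σ_j ∂/∂z^j ⊗ (ψ^j ∧ ·)` is the de Rham differential and
`koszul = −Σ_j (b_j ·) ⊗ ι_j` the Koszul differential, where `ct j = ι_j` is the
odd derivation of `Λ(V)` with `ι_j ψ̄_i = δ_{ij}` (w.r.t. the parity `σΛ`).
The combined Fourier transform is `𝓕 = FT ⊗ 𝓕_Λ`, where
`FT f (b) = ∫ f(z) e^{i⟨b,z⟩} dz` and `𝓕_Λ(η) = ∫dψ (η · e^{i ψ̄_j ψ^j})` is the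
Grassmann Fourier transform (via the Berezin integral `Ber` on `Egr n = Λ(V*⊕V)`,
characterized as in Statement 6, with `emb2` the embedding of the source exterior
algebra and `proj1` the projection onto the target one).

Conclusion: `𝓕 ∘ d = δ ∘ 𝓕` as maps `𝒮(ℝⁿ) ⊗ Λ((ℝⁿ)*) → 𝒮((ℝⁿ)*) ⊗ Λ(ℝⁿ)`.
-/

open Finset

noncomputable section

/-- `Λ(V* ⊕ V)`, a model of the ℤ₂-graded tensor product `Λ(V*) ⊗ Λ(V)`. -/
abbrev Egr (n : ℕ) := ExteriorAlgebra ℂ ((Fin n → ℂ) × (Fin n → ℂ))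

/-- The generators `ψ^a` of the `Λ(V)` factor. -/
def psv (n : ℕ) (a : Fin n) : Egr n := ExteriorAlgebra.ι ℂ (0, Pi.single a 1)

/-- The generators `ψ̄_a` of the `Λ(V*)` factor. -/
def psb (n : ℕ) (a : Fin n) : Egr n := ExteriorAlgebra.ι ℂ (Pi.single a 1, 0)

/-- The top monomial `ψ^1 ∧ … ∧ ψ^n`. -/
def psvTop (n : ℕ) : Egr n := ((List.finRange n).map (psv n)).prod

/-- The subalgebra `Λ(V*) ⊆ Λ(V* ⊕ V)`. -/
def AlgD (n : ℕ) : Subalgebra ℂ (Egr n) := Algebra.adjoin ℂ (Set.range (psb n))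

/-- The subspace `Λ¹(V) ⊆ Λ(V* ⊕ V)`; `(PV n) ^ k` is `Λ^k(V)`. -/
def PV (n : ℕ) : Submodule ℂ (Egr n) := Submodule.span ℂ (Set.range (psv n))

/-- The Fourier kernel `e^{i ψ̄_j ⊗ ψ^j}`; the series terminates at the n-th power. -/
def fourierKernel (n : ℕ) : Egr n :=
  ∑ m ∈ range (n + 1),
    ((Nat.factorial m : ℂ))⁻¹ • (Complex.I • ∑ j, psb n j * psv n j) ^ m


/-- The exterior algebra `Λ` on an `n`-dimensional complex vector space
(modeling both `Λ(V*)` and `Λ(V)`). -/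
abbrev Lam (n : ℕ) := ExteriorAlgebra ℂ (Fin n → ℂ)

/-- Its degree-1 generators. -/
def lamGen (n : ℕ) (a : Fin n) : Lam n := ExteriorAlgebra.ι ℂ (Pi.single a 1)

/-- The embedding of `Lam n` as the second (integrated-over) factor of `Egr n`. -/
def emb2 (n : ℕ) : Lam n →ₐ[ℂ] Egr n :=
  ExteriorAlgebra.lift ℂ
    ⟨(ExteriorAlgebra.ι ℂ).comp (LinearMap.inr ℂ (Fin n → ℂ) (Fin n → ℂ)),
      fun _ => ExteriorAlgebra.ι_sq_zero _⟩

/-- The projection of `Egr n` onto its first factor `Lam n`. -/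
def proj1 (n : ℕ) : Egr n →ₐ[ℂ] Lam n :=
  ExteriorAlgebra.lift ℂ
    ⟨(ExteriorAlgebra.ι ℂ).comp (LinearMap.fst ℂ (Fin n → ℂ) (Fin n → ℂ)),
      fun _ => ExteriorAlgebra.ι_sq_zero _⟩

/-- The Grassmann Fourier transform `𝓕_Λ(η) = ∫dψ (η · e^{i ψ̄_j ψ^j})`,
as a linear map `Λ(V*) → Λ(V)`. -/
def grFourierL (n : ℕ) (Ber : Egr n →ₗ[ℂ] Egr n) : Lam n →ₗ[ℂ] Lam n :=
  (proj1 n).toLinearMap ∘ₗ Ber ∘ₗ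
    (LinearMap.mulRight ℂ (fourierKernel n)) ∘ₗ (emb2 n).toLinearMap

/-- Schwartz functions on `ℝⁿ` (with complex values). -/
abbrev Sch (n : ℕ) := SchwartzMap (Fin n → ℝ) ℂ

open scoped TensorProduct

/-- The de Rham differential `d(f ⊗ η) = Σ_j ∂f/∂z^j ⊗ ψ^j ∧ η` on
`𝒮(V) ⊗ Λ(V*)`. -/
def dRham (n : ℕ) (pd : Fin n → Sch n →ₗ[ℂ] Sch n) :
    Sch n ⊗[ℂ] Lam n →ₗ[ℂ] Sch n ⊗[ℂ] Lam n :=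
  ∑ j, TensorProduct.map (pd j) (LinearMap.mulLeft ℂ (lamGen n j))

/-- The Koszul differential `δ(f ⊗ ψ̄_i) = −(b_i f) ⊗ 1`, i.e.
`δ = −Σ_j (b_j ·) ⊗ ι_j`, on `𝒮(V*) ⊗ Λ(V)`. -/
def koszul (n : ℕ) (mulCoord : Fin n → Sch n →ₗ[ℂ] Sch n)
    (ct : Fin n → Lam n →ₗ[ℂ] Lam n) :
    Sch n ⊗[ℂ] Lam n →ₗ[ℂ] Sch n ⊗[ℂ] Lam n :=
  -∑ j, TensorProduct.map (mulCoord j) (ct j)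

/-!
For a Schwartz function, integration by parts against `e^{i⟨b,z⟩}` turns `∂/∂z^j` into
multiplication by `-i b_j`. On the Grassmann side the same role is played by contraction: `ι_j`
takes the even element `i Σ ψ̄_k ψ^k` to `i ψ^j`, hence its exponential, the Fourier kernel, to
`i ψ^j` times itself. Since `ι_j` commutes with the Berezin integral over the `ψ`s,
`ι_j (𝓕_Λ η) = i 𝓕_Λ (ψ^j ∧ η)`, so left multiplication by `ψ^j` becomes `-i ι_j`. The product
`(-i b_j) ⊗ (-i ι_j) = -b_j ⊗ ι_j` is the `j`-th term of the Koszul differential.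
-/

open CliffordAlgebra (involute involute_ι contractLeft_algebraMap contractLeft_one
  contractLeft_ι_mul)
open Module (Dual)

local notation:72 d:72 "⨼" x:73 => CliffordAlgebra.contractLeft d x

section Nilpotent

variable {ι A : Type*} [Semiring A]

lemma sum_pow_card_succ_eq_zero_of_sq_eq_zero {f : ι → A} (s : Finset ι)
    (hcomm : ∀ i j, Commute (f i) (f j)) (hsq : ∀ i, f i ^ 2 = 0) :
    (∑ i ∈ s, f i) ^ (#s + 1) = 0 := by
  classical
  induction s using Finset.induction_on with
  | empty => simp
  | insert a s ha ih =>
    rw [sum_insert ha, card_insert_of_notMem ha]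
    exact (Commute.sum_right _ _ _ fun i _ => hcomm a i)
      |>.add_pow_eq_zero_of_add_le_succ_of_pow_eq_zero (hsq a) ih (by lia)

end Nilpotent

section Clifford

variable {R M : Type*} [CommRing R] [AddCommGroup M] [Module R M] {Q : QuadraticForm R M}

lemma contractLeft_mul (d : Dual R M) (x y : CliffordAlgebra Q) :
    d⨼(x * y) = d⨼x * y + involute x * d⨼y := by
  induction x using CliffordAlgebra.left_induction with
  | algebraMap r => simp [contractLeft_algebraMap, ← Algebra.smul_def]
  | add x z hx hz => simp only [add_mul, map_add, hx, hz]; abel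
  | ι_mul x m hx =>
    rw [mul_assoc, contractLeft_ι_mul, contractLeft_ι_mul, hx, map_mul, involute_ι]
    simp only [mul_add, sub_mul, smul_mul_assoc, neg_mul, mul_assoc]
    abel

lemma eq_contractLeft_of_skew_leibniz {d : Dual R M}
    {σ D : CliffordAlgebra Q →ₗ[R] CliffordAlgebra Q} (hσ_one : σ 1 = 1)
    (hσ_ι : ∀ m, σ (CliffordAlgebra.ι Q m) = -CliffordAlgebra.ι Q m)
    (hD_mul : ∀ x y, D (x * y) = D x * y + σ x * D y)
    (hD_ι : ∀ m, D (CliffordAlgebra.ι Q m) = algebraMap R _ (d m)) :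
    D = CliffordAlgebra.contractLeft d := by
  have hD_one : D 1 = 0 := by simpa [hσ_one] using hD_mul 1 1
  ext x
  induction x using CliffordAlgebra.left_induction with
  | algebraMap r =>
    rw [contractLeft_algebraMap, Algebra.algebraMap_eq_smul_one, map_smul, hD_one, smul_zero]
  | add x y hx hy => rw [map_add, map_add, hx, hy]
  | ι_mul x m hx =>
    rw [hD_mul, contractLeft_ι_mul, hσ_ι, hD_ι, hx, ← Algebra.smul_def, neg_mul, sub_eq_add_neg]

lemma contractLeft_pow_succ {d : Dual R M} {ω : CliffordAlgebra Q} (heven : involute ω = ω)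
    (hcomm : Commute (d⨼ω) ω) (m : ℕ) :
    d⨼(ω ^ (m + 1)) = (m + 1) • (d⨼ω * ω ^ m) := by
  induction m with
  | zero => simp
  | succ m ih =>
    rw [pow_succ', contractLeft_mul, heven, ih, mul_smul_comm, ← mul_assoc ω, ← hcomm.eq,
      mul_assoc, ← pow_succ', succ_nsmul' _ (m + 1)]

lemma contractLeft_exp [Module ℚ (CliffordAlgebra Q)] {d : Dual R M} {ω : CliffordAlgebra Q}
    (hω : IsNilpotent ω) (heven : involute ω = ω) (hcomm : Commute (d⨼ω) ω) :
    d⨼(IsNilpotent.exp ω) = d⨼ω * IsNilpotent.exp ω := by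
  obtain ⟨k, hk⟩ := hω
  have hterm (m : ℕ) : d⨼(((m + 1).factorial : ℚ)⁻¹ • ω ^ (m + 1))
      = d⨼ω * ((m.factorial : ℚ)⁻¹ • ω ^ m) := by
    rw [map_rat_smul, contractLeft_pow_succ heven hcomm, mul_smul_comm, ← Nat.cast_smul_eq_nsmul ℚ,
      smul_smul, Nat.factorial_succ]
    congr 1
    push_cast
    field_simp
  calc d⨼(IsNilpotent.exp ω)
      = ∑ m ∈ range k, d⨼(((m + 1).factorial : ℚ)⁻¹ • ω ^ (m + 1)) := by
        rw [IsNilpotent.exp_eq_sum (pow_eq_zero_of_le k.le_succ hk), sum_range_succ', map_add,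
          map_sum, map_rat_smul, pow_zero, contractLeft_one, smul_zero, add_zero]
    _ = d⨼ω * IsNilpotent.exp ω := by
        rw [IsNilpotent.exp_eq_sum hk, mul_sum]
        exact sum_congr rfl fun m _ => hterm m

end Clifford

section Exterior

variable {R M N : Type*} [CommRing R] [AddCommGroup M] [Module R M] [AddCommGroup N] [Module R N]

open ExteriorAlgebra

lemma contractLeft_map (d : Dual R N) (f : M →ₗ[R] N) (x : ExteriorAlgebra R M) :
    d⨼(map f x) = map f ((d ∘ₗ f)⨼x) := by
  induction x using CliffordAlgebra.left_induction with
  | algebraMap r => simp [contractLeft_algebraMap]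
  | add x y hx hy => simp only [map_add, hx, hy]
  | ι_mul x m hx =>
    rw [map_mul, map_apply_ι, contractLeft_ι_mul, hx, contractLeft_ι_mul, map_sub, map_mul,
      map_apply_ι, map_smul]
    rfl

lemma involute_map (f : M →ₗ[R] N) (x : ExteriorAlgebra R M) :
    involute (map f x) = map f (involute x) :=
  DFunLike.congr_fun (f := involute.comp (map f)) (g := (map f).comp involute)
    (hom_ext <| by ext m; simp) x

lemma ι_mul_eq_involute_mul_ι (m : M) (x : ExteriorAlgebra R M) :
    ι R m * x = involute x * ι R m := by
  induction x using CliffordAlgebra.left_induction with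
  | algebraMap r => simp [Algebra.commutes]
  | add x y hx hy => simp only [add_mul, mul_add, map_add, hx, hy]
  | ι_mul x a hx =>
    rw [← mul_assoc, eq_neg_of_add_eq_zero_left (ι_add_mul_swap m a), map_mul, involute_ι,
      neg_mul, neg_mul, neg_mul, mul_assoc, hx, mul_assoc]

lemma commute_of_involute_eq_self {ω : ExteriorAlgebra R M} (heven : involute ω = ω)
    (x : ExteriorAlgebra R M) : Commute x ω := by
  induction x using ExteriorAlgebra.induction with
  | algebraMap r => exact Algebra.commute_algebraMap_left r ω
  | ι m => exact (ι_mul_eq_involute_mul_ι m ω).trans (by rw [heven])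
  | mul x y hx hy => exact hx.mul_left hy
  | add x y hx hy => exact hx.add_left hy

lemma involute_ι_mul_ι (a b : M) : involute (ι R a * ι R b) = ι R a * ι R b := by
  simp

lemma ι_mul_ι_sq (a b : M) : (ι R a * ι R b) ^ 2 = 0 := by
  rw [sq, ← mul_assoc, ← (commute_of_involute_eq_self (involute_ι_mul_ι a b) (ι R a)).eq,
    ← mul_assoc, ι_sq_zero, zero_mul, zero_mul]

lemma range_map_inl_mul_range_map_inr :
    (map (LinearMap.inl R M N)).range.toSubmodule * (map (LinearMap.inr R M N)).range.toSubmodule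
      = ⊤ := by
  refine Submodule.eq_top_iff'.2 fun x => ?_
  induction x using CliffordAlgebra.left_induction with
  | algebraMap r =>
    rw [← mul_one (algebraMap R _ r)]
    exact Submodule.mul_mem_mul (algebraMap_mem (AlgHom.range _) r) (one_mem (AlgHom.range _))
  | add x y hx hy => exact add_mem hx hy
  | ι_mul x p hx =>
    refine Submodule.mul_induction_on hx ?_ fun x y hx hy => by rw [mul_add]; exact add_mem hx hy
    rintro _ ⟨x, rfl⟩ _ ⟨y, rfl⟩
    have hsplit : ι R p * (map (LinearMap.inl R M N) x * map (LinearMap.inr R M N) y)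
        = map (LinearMap.inl R M N) (ι R p.1 * x) * map (LinearMap.inr R M N) y
          + map (LinearMap.inl R M N) (involute x) * map (LinearMap.inr R M N) (ι R p.2 * y) := by
      have hp : p = LinearMap.inl R M N p.1 + LinearMap.inr R M N p.2 := by simp
      rw [map_mul, map_mul, ← involute_map, ← mul_assoc (involute _), map_apply_ι, map_apply_ι,
        ← ι_mul_eq_involute_mul_ι, ← add_mul, ← add_mul, ← map_add, ← hp, mul_assoc]
    refine (congrArg (· ∈ _) hsplit).mpr ?_
    exact add_mem (Submodule.mul_mem_mul ⟨_, rfl⟩ ⟨_, rfl⟩)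
      (Submodule.mul_mem_mul ⟨_, rfl⟩ ⟨_, rfl⟩)

end Exterior

section Grassmann

open ExteriorAlgebra (ιMulti ιMulti_apply)

variable {n : ℕ}

lemma emb2_eq_map : emb2 n = ExteriorAlgebra.map (LinearMap.inr ℂ _ _) := rfl

lemma proj1_eq_map : proj1 n = ExteriorAlgebra.map (LinearMap.fst ℂ _ _) := rfl

lemma map_inl_mem_AlgD (x : Lam n) :
    ExteriorAlgebra.map (LinearMap.inl ℂ _ _) x ∈ AlgD n := by
  induction x using ExteriorAlgebra.induction with
  | algebraMap r => simp
  | add x y hx hy => simpa using add_mem hx hy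
  | mul x y hx hy => simpa using mul_mem hx hy
  | ι v =>
    have hv : ExteriorAlgebra.map (LinearMap.inl ℂ _ _) (ExteriorAlgebra.ι ℂ v)
        = ∑ i, v i • psb n i := by
      conv_lhs => rw [pi_eq_sum_univ' v]
      simp [psb]
    exact (congrArg (· ∈ AlgD n) hv).mpr <| sum_mem fun i _ =>
      Subalgebra.smul_mem _ (Algebra.subset_adjoin (Set.mem_range_self i)) _

lemma emb2_lamGen (j : Fin n) : emb2 n (lamGen n j) = psv n j := by
  simp [emb2, lamGen, psv]

lemma emb2_ιMulti_single {k : ℕ} (f : Fin k → Fin n) :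
    emb2 n (ιMulti ℂ k fun i => Pi.single (f i) 1) = (List.ofFn fun i => psv n (f i)).prod := by
  rw [emb2_eq_map, ExteriorAlgebra.map_apply_ιMulti, ιMulti_apply]
  rfl

lemma list_ofFn_psv_prod_mem_PV_pow {k : ℕ} (f : Fin k → Fin n) :
    (List.ofFn fun i => psv n (f i)).prod ∈ PV n ^ k :=
  Submodule.pow_subset_pow _ <| Set.mem_pow.2
    ⟨fun i => ⟨psv n (f i), Submodule.subset_span ⟨f i, rfl⟩⟩, rfl⟩

lemma emb2_basis {s : Finset (Fin n)} {k : ℕ} (hs : #s = k) :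
    emb2 n ((Pi.basisFun ℂ (Fin n)).ExteriorAlgebra s)
      = (List.ofFn fun i => psv n (s.orderEmbOfFin hs i)).prod := by
  rw [ExteriorAlgebra.basis_apply_ofCard _ hs, ← emb2_ιMulti_single]
  simp only [ExteriorAlgebra.ιMulti_family, Function.comp_def, Pi.basisFun_apply]
  rfl

lemma emb2_basis_mem_PV_pow_card (s : Finset (Fin n)) :
    emb2 n ((Pi.basisFun ℂ (Fin n)).ExteriorAlgebra s) ∈ PV n ^ #s := by
  rw [emb2_basis rfl]
  exact list_ofFn_psv_prod_mem_PV_pow _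

lemma emb2_basis_univ :
    emb2 n ((Pi.basisFun ℂ (Fin n)).ExteriorAlgebra univ) = psvTop n := by
  rw [emb2_basis (card_fin n),
    ← orderEmbOfFin_unique (card_fin n) (fun _ => mem_univ _) strictMono_id, psvTop,
    List.ofFn_eq_map]
  rfl

lemma contractLeft_fst_emb2 (d : Dual ℂ (Fin n → ℂ)) (η : Lam n) :
    (d ∘ₗ LinearMap.fst ℂ _ (Fin n → ℂ))⨼(emb2 n η) = 0 := by
  rw [emb2_eq_map, contractLeft_map, LinearMap.comp_assoc, LinearMap.fst_comp_inr,
    LinearMap.comp_zero, map_zero, LinearMap.zero_apply, map_zero]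

/-- `Ber` is the Berezin integral `∫dψ` over the second factor of `Egr n`: it is linear over
`AlgD n` from the left, sends `ψ^1 ∧ … ∧ ψ^n` to `1`, and vanishes on lower powers of the `ψ^j`.
Left linearity is encoded by putting the coefficient `ξ ∈ AlgD n` into both conditions. -/
structure IsBerezin (Ber : Egr n →ₗ[ℂ] Egr n) : Prop where
  mul_psvTop : ∀ ξ ∈ AlgD n, Ber (ξ * psvTop n) = ξ
  mul_PV_pow : ∀ ξ ∈ AlgD n, ∀ k < n, ∀ y ∈ PV n ^ k, Ber (ξ * y) = 0

namespace IsBerezin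

variable {Ber : Egr n →ₗ[ℂ] Egr n} (hBer : IsBerezin Ber)

include hBer

lemma exists_apply_mul_emb2 (η : Lam n) : ∃ c : ℂ, ∀ ξ ∈ AlgD n, Ber (ξ * emb2 n η) = c • ξ := by
  have hη := (Pi.basisFun ℂ (Fin n)).ExteriorAlgebra.mem_span η
  induction hη using Submodule.span_induction with
  | mem _ h =>
    obtain ⟨s, rfl⟩ := h
    rcases eq_or_ne s univ with rfl | hs
    · exact ⟨1, fun ξ hξ => by rw [emb2_basis_univ, hBer.mul_psvTop ξ hξ, one_smul]⟩
    · have hcard : #s < n := by simpa using card_lt_card (ssubset_univ_iff.2 hs)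
      exact ⟨0, fun ξ hξ => by
        rw [hBer.mul_PV_pow ξ hξ _ hcard _ (emb2_basis_mem_PV_pow_card s), zero_smul]⟩
  | zero => exact ⟨0, fun ξ _ => by simp⟩
  | add x y _ _ hx hy =>
    obtain ⟨a, ha⟩ := hx
    obtain ⟨b, hb⟩ := hy
    exact ⟨a + b, fun ξ hξ => by rw [map_add, mul_add, map_add, ha ξ hξ, hb ξ hξ, add_smul]⟩
  | smul a x _ hx =>
    obtain ⟨b, hb⟩ := hx
    exact ⟨a * b, fun ξ hξ => by rw [map_smul, mul_smul_comm, map_smul, hb ξ hξ, mul_smul]⟩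

lemma apply_contractLeft (d : Dual ℂ (Fin n → ℂ)) (x : Egr n) :
    Ber ((d ∘ₗ LinearMap.fst ℂ _ (Fin n → ℂ))⨼x)
      = (d ∘ₗ LinearMap.fst ℂ _ (Fin n → ℂ))⨼(Ber x) := by
  have hx := range_map_inl_mul_range_map_inr.ge (Submodule.mem_top (x := x))
  induction hx using Submodule.mul_induction_on' with
  | add x _ y _ hx hy => simp only [map_add, hx, hy]
  | mem_mul_mem x hx y hy =>
    obtain ⟨ξ, rfl⟩ : ∃ ξ, ExteriorAlgebra.map (LinearMap.inl ℂ _ _) ξ = x := hx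
    obtain ⟨η, rfl⟩ : ∃ η, emb2 n η = y := hy
    obtain ⟨c, hc⟩ := hBer.exists_apply_mul_emb2 η
    rw [contractLeft_mul, contractLeft_fst_emb2, mul_zero, add_zero,
      hc _ (map_inl_mem_AlgD ξ), map_smul, contractLeft_map, hc _ (map_inl_mem_AlgD _)]

end IsBerezin

/-- The exponent `i ψ̄_j ψ^j` of the Fourier kernel. -/
def fourierExponent (n : ℕ) : Egr n := Complex.I • ∑ j, psb n j * psv n j

lemma involute_fourierExponent : involute (fourierExponent n) = fourierExponent n := by
  rw [fourierExponent, map_smul, map_sum]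
  exact congrArg _ (sum_congr rfl fun j _ => involute_ι_mul_ι _ _)

lemma fourierExponent_pow_succ : fourierExponent n ^ (n + 1) = 0 := by
  have hsum : (∑ j, psb n j * psv n j) ^ (#(univ : Finset (Fin n)) + 1) = 0 :=
    sum_pow_card_succ_eq_zero_of_sq_eq_zero univ
      (fun _ _ => commute_of_involute_eq_self (involute_ι_mul_ι _ _) _) fun _ => ι_mul_ι_sq _ _
  rw [card_fin] at hsum
  rw [fourierExponent, smul_pow, hsum, smul_zero]

lemma fourierKernel_eq_exp : fourierKernel n = IsNilpotent.exp (fourierExponent n) := by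
  rw [IsNilpotent.exp_eq_sum fourierExponent_pow_succ]
  exact sum_congr rfl fun m _ => inv_natCast_smul_eq ℂ ℚ _ _

lemma contractLeft_fourierExponent (j : Fin n) :
    (LinearMap.proj j ∘ₗ LinearMap.fst ℂ (Fin n → ℂ) (Fin n → ℂ))⨼(fourierExponent n)
      = Complex.I • psv n j := by
  simp [fourierExponent, psb, psv, contractLeft_ι_mul, Pi.single_apply]

lemma contractLeft_fourierKernel (j : Fin n) :
    (LinearMap.proj j ∘ₗ LinearMap.fst ℂ (Fin n → ℂ) (Fin n → ℂ))⨼(fourierKernel n)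
      = Complex.I • (psv n j * fourierKernel n) := by
  rw [fourierKernel_eq_exp, contractLeft_exp ⟨_, fourierExponent_pow_succ⟩ involute_fourierExponent
    (commute_of_involute_eq_self involute_fourierExponent _), contractLeft_fourierExponent,
    smul_mul_assoc]

lemma IsBerezin.contractLeft_grFourierL {Ber : Egr n →ₗ[ℂ] Egr n} (hBer : IsBerezin Ber)
    (j : Fin n) (η : Lam n) :
    (LinearMap.proj j)⨼(grFourierL n Ber η) = Complex.I • grFourierL n Ber (lamGen n j * η) := by
  have hkernel : (LinearMap.proj j ∘ₗ LinearMap.fst ℂ _ _)⨼(emb2 n η * fourierKernel n)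
      = Complex.I • (emb2 n (lamGen n j * η) * fourierKernel n) := by
    rw [contractLeft_mul, contractLeft_fst_emb2, zero_mul, zero_add, contractLeft_fourierKernel,
      mul_smul_comm, ← mul_assoc, map_mul, emb2_lamGen]
    exact congrArg (fun y => Complex.I • (y * fourierKernel n))
      (ι_mul_eq_involute_mul_ι _ _).symm
  simp only [grFourierL, LinearMap.comp_apply, AlgHom.toLinearMap_apply, LinearMap.mulRight_apply]
  rw [← map_smul, ← map_smul, ← hkernel, hBer.apply_contractLeft, proj1_eq_map, contractLeft_map]

lemma eq_contractLeft_proj_of_lamGen {σ D : Lam n →ₗ[ℂ] Lam n} {j : Fin n} (hσ_one : σ 1 = 1)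
    (hσ_gen : ∀ i, σ (lamGen n i) = -lamGen n i)
    (hD_mul : ∀ x y, D (x * y) = D x * y + σ x * D y)
    (hD_gen : ∀ i, D (lamGen n i) = if i = j then 1 else 0) :
    D = CliffordAlgebra.contractLeft (LinearMap.proj j) := by
  have hσ_ι : σ ∘ₗ ExteriorAlgebra.ι ℂ = -ExteriorAlgebra.ι ℂ :=
    LinearMap.pi_ext' fun i => LinearMap.ext_ring (hσ_gen i)
  have hD_ι : D ∘ₗ ExteriorAlgebra.ι ℂ = Algebra.linearMap ℂ (Lam n) ∘ₗ LinearMap.proj j := by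
    refine LinearMap.pi_ext' fun i => LinearMap.ext_ring ((hD_gen i).trans ?_)
    simp [Pi.single_apply, eq_comm, apply_ite (algebraMap ℂ (Lam n))]
  exact eq_contractLeft_of_skew_leibniz hσ_one (LinearMap.congr_fun hσ_ι) hD_mul
    (LinearMap.congr_fun hD_ι)

end Grassmann

section Analysis

open MeasureTheory Complex

variable {V E : Type*} [NormedAddCommGroup V] [NormedSpace ℝ V] [NormedAddCommGroup E]
  [NormedSpace ℂ E]

lemma hasFDerivAt_cexp_I_mul (ℓ : V →L[ℝ] ℝ) (x : V) :
    HasFDerivAt (fun x => cexp (I * ℓ x)) (cexp (I * ℓ x) • I • ofRealCLM ∘L ℓ) x :=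
  ((ofRealCLM ∘L ℓ).hasFDerivAt.const_mul I).cexp

lemma integrable_cexp_I_mul_smul [MeasurableSpace V] [BorelSpace V] {μ : Measure V}
    {f : V → E} (hf : Integrable f μ) (ℓ : V →L[ℝ] ℝ) :
    Integrable (fun x => cexp (I * ℓ x) • f x) μ :=
  hf.bdd_smul 1 (by fun_prop) (.of_forall fun x => by simp [mul_comm I, norm_exp_ofReal_mul_I])

lemma integral_cexp_I_mul_smul_fderiv [FiniteDimensional ℝ V] [MeasurableSpace V] [BorelSpace V]
    {μ : Measure V} [μ.IsAddHaarMeasure] {f : V → E} {v : V} (hf : Integrable f μ)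
    (hdiff : Differentiable ℝ f) (hf' : Integrable (fun x => fderiv ℝ f x v) μ) (ℓ : V →L[ℝ] ℝ) :
    ∫ x, cexp (I * ℓ x) • fderiv ℝ f x v ∂μ = -(I * ℓ v) • ∫ x, cexp (I * ℓ x) • f x ∂μ := by
  have hwave (x : V) :
      fderiv ℝ (fun x => cexp (I * ℓ x)) x v • f x = (I * ℓ v) • cexp (I * ℓ x) • f x := by
    rw [(hasFDerivAt_cexp_I_mul ℓ x).fderiv]
    change (cexp (I * ℓ x) * (I * ℓ v)) • f x = _
    rw [smul_smul, mul_comm]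
  rw [integral_smul_fderiv_eq_neg_fderiv_smul_of_integrable]
  · simp only [hwave, integral_smul, neg_smul]
  · simpa only [hwave] using (integrable_cexp_I_mul_smul hf ℓ).fun_smul (I * ℓ v : ℂ)
  · exact integrable_cexp_I_mul_smul hf' ℓ
  · exact integrable_cexp_I_mul_smul hf ℓ
  · exact fun x _ => (hasFDerivAt_cexp_I_mul ℓ x).differentiableAt
  · exact fun x _ => hdiff x

lemma integral_cexp_sum_mul_fderiv_single {ι : Type*} [Fintype ι] [DecidableEq ι]
    (f : SchwartzMap (ι → ℝ) ℂ) (j : ι) (b : ι → ℝ) :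
    ∫ z, cexp (I * ∑ i, (b i : ℂ) * (z i : ℂ)) * fderiv ℝ f z (Pi.single j 1)
      = -(I * b j) * ∫ z, cexp (I * ∑ i, (b i : ℂ) * (z i : ℂ)) * f z := by
  let ℓ : (ι → ℝ) →L[ℝ] ℝ := ∑ i, b i • ContinuousLinearMap.proj i
  have hℓ (z : ι → ℝ) : (ℓ z : ℂ) = ∑ i, (b i : ℂ) * (z i : ℂ) := by simp [ℓ]
  have hℓj : ℓ (Pi.single j 1) = b j := by simp [ℓ, Pi.single_apply]
  have hf' : Integrable fun z => fderiv ℝ f z (Pi.single j 1) :=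
    (LineDeriv.lineDerivOp (Pi.single j 1 : ι → ℝ) f).integrable
  simpa only [hℓ, hℓj, smul_eq_mul] using
    integral_cexp_I_mul_smul_fderiv f.integrable f.differentiable hf' ℓ

end Analysis

lemma fourier_partialDeriv {n : ℕ} {FT pd mulCoord : Sch n →ₗ[ℂ] Sch n} {j : Fin n}
    (hpd : ∀ (f : Sch n) z, pd f z = fderiv ℝ f z (Pi.single j 1))
    (hmc : ∀ (f : Sch n) b, mulCoord f b = (b j : ℂ) * f b)
    (hFT : ∀ (f : Sch n) b,
      FT f b = ∫ z : Fin n → ℝ, Complex.exp (Complex.I * ∑ i, (b i : ℂ) * (z i : ℂ)) * f z)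
    (f : Sch n) : FT (pd f) = -Complex.I • mulCoord (FT f) := by
  ext b
  rw [smul_apply, hmc, hFT, hFT]
  simp only [hpd, integral_cexp_sum_mul_fderiv_single, smul_eq_mul]
  ring

theorem statement9 {n : ℕ}
    -- the Berezin integral defining the Grassmann Fourier transform
    (Ber : Egr n →ₗ[ℂ] Egr n)
    (hBer_top : ∀ ξ ∈ AlgD n, Ber (ξ * psvTop n) = ξ)
    (hBer_low : ∀ ξ ∈ AlgD n, ∀ k < n, ∀ y ∈ ((PV n) ^ k : Submodule ℂ (Egr n)),
      Ber (ξ * y) = 0)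
    -- the partial derivatives ∂/∂z^j on Schwartz space
    (pd : Fin n → Sch n →ₗ[ℂ] Sch n)
    (hpd : ∀ j (f : Sch n) (z : Fin n → ℝ), pd j f z = fderiv ℝ (⇑f) z (Pi.single j 1))
    -- multiplication by the coordinates b_j on Schwartz space
    (mulCoord : Fin n → Sch n →ₗ[ℂ] Sch n)
    (hmc : ∀ j (f : Sch n) (b : Fin n → ℝ), mulCoord j f b = (b j : ℂ) * f b)
    -- the Fourier transform f̂(b) = ∫ f(z) e^{i⟨b,z⟩} dz on Schwartz space
    (FT : Sch n →ₗ[ℂ] Sch n)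
    (hFT : ∀ (f : Sch n) (b : Fin n → ℝ),
      FT f b = ∫ z : Fin n → ℝ, Complex.exp (Complex.I * ∑ j, (b j : ℂ) * (z j : ℂ)) * f z)
    -- the parity involution of Λ(V) and the contractions ι_j dual to the ψ̄_j
    (σΛ : Lam n →ₗ[ℂ] Lam n) (hσ_mul : ∀ x y, σΛ (x * y) = σΛ x * σΛ y)
    (hσ_one : σΛ 1 = 1) (hσ_gen : ∀ i, σΛ (lamGen n i) = -lamGen n i)
    (ct : Fin n → Lam n →ₗ[ℂ] Lam n)
    (hct_der : ∀ j x y, ct j (x * y) = ct j x * y + σΛ x * ct j y)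
    (hct_gen : ∀ j i, ct j (lamGen n i) = if i = j then 1 else 0) :
    -- Conclusion: 𝓕 ∘ d = δ ∘ 𝓕.
    TensorProduct.map FT (grFourierL n Ber) ∘ₗ dRham n pd
      = koszul n mulCoord ct ∘ₗ TensorProduct.map FT (grFourierL n Ber) := by
  refine TensorProduct.ext' fun f η => ?_
  simp only [LinearMap.comp_apply, dRham, koszul, LinearMap.sum_apply, LinearMap.neg_apply,
    TensorProduct.map_tmul, map_sum, LinearMap.mulLeft_apply]
  rw [← sum_neg_distrib]
  refine sum_congr rfl fun j _ => ?_
  have hFourier : FT (pd j f) = -Complex.I • mulCoord j (FT f) :=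
    fourier_partialDeriv (hpd j) (hmc j) hFT f
  have hcontract : ct j = CliffordAlgebra.contractLeft (LinearMap.proj j) :=
    eq_contractLeft_proj_of_lamGen hσ_one hσ_gen (hct_der j) (hct_gen j)
  have hGrassmann : ct j (grFourierL n Ber η) = Complex.I • grFourierL n Ber (lamGen n j * η) :=
    hcontract ▸ IsBerezin.contractLeft_grFourierL ⟨hBer_top, hBer_low⟩ j η
  rw [hFourier, hGrassmann, TensorProduct.smul_tmul, neg_smul, TensorProduct.tmul_neg]
end
end

section
/- Let X = (X^j_k) be a real n×n matrix, determining the linear vector field V_ξ(z) = Xz on V = ℝ^n, and let ι_ξ be the contraction with V_ξ on Ω_s(V) = 𝒮(V) ⊗ Λ(V*): the degree −1 graded derivation with ι_ξ(f ⊗ 1) = 0 and ι_ξ(f ⊗ ψ^j) = (X^j_k z^k f) ⊗ 1. Then for every f ⊗ η ∈ 𝒮(V) ⊗ Λ(V*): 𝓕(ι_ξ(f ⊗ η)) = (−∂/∂b_j ⊗ (ξ·ψ̄_j) ∧) 𝓕(f ⊗ η), summation over j, where ξ·ψ̄_j = −X^k_j ψ̄_k is the induced action of ξ on the dual generators, ∂/∂b_j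 acts on the Schwartz factor, and the wedge is left multiplication in Λ(V). Equivalently, 𝓕(ι_ξ(f ⊗ η)) = Σ_{j,k} X^j_k (∂/∂b_k ⊗ ψ̄_j ∧) 𝓕(f ⊗ η). -/
/-!
STATEMENT 10.  Context: as in Statement 9, differential forms on `V = ℝⁿ` with
Schwartz coefficients are `𝒮(ℝⁿ,ℂ) ⊗ Λ(V*)` (generators `lamGen j = ψ^j = dz^j`),
the dual side is `𝒮(V*,ℂ) ⊗ Λ(V)` (generators `ψ̄_j`), and the combined Fourier
transform is `𝓕 = FT ⊗ 𝓕_Λ` with `FT f (b) = ∫ f(z) e^{i⟨b,z⟩} dz` and `𝓕_Λ` the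
Grassmann Fourier transform (`grFourierL`, via the Berezin integral `Ber`).
A real `n×n` matrix `X` determines the linear vector field `V_ξ(z) = Xz`, whose
contraction `ι_ξ = Σ_j (X^j_k z^k ·) ⊗ ι_j` (`iotaXi`) is the odd derivation with
`ι_ξ(f ⊗ ψ^j) = (X^j_k z^k f) ⊗ 1`.

Conclusion: `𝓕 ∘ ι_ξ = Σ_{j,k} X^j_k (∂/∂b_k ⊗ ψ̄_j ∧ ·) ∘ 𝓕`.
-/

open Finset

noncomputable section

open scoped TensorProduct


/-- The contraction `ι_ξ` with the linear vector field `V_ξ(z) = Xz`: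
`ι_ξ = Σ_j (Σ_k X^j_k z^k ·) ⊗ ι_j` on `𝒮(V) ⊗ Λ(V*)`. -/
def iotaXi (n : ℕ) (mulZ : Fin n → Sch n →ₗ[ℂ] Sch n)
    (ctd : Fin n → Lam n →ₗ[ℂ] Lam n) :
    Sch n ⊗[ℂ] Lam n →ₗ[ℂ] Sch n ⊗[ℂ] Lam n :=
  ∑ j, TensorProduct.map (mulZ j) (ctd j)

/-!
Contraction with the functional dual to `ψ^j` is the Grassmann derivative `∂/∂ψ^j`. It lowers the
`ψ`-degree, so the Berezin integral of such a derivative vanishes, and it multiplies the kernel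
`K = e^{i ψ̄_k ψ^k}` by `-i ψ̄_j`. Integrating `∂/∂ψ^j (η K)` by parts gives
`𝓕_Λ(ι_j η) = i ψ̄_j 𝓕_Λ(η)`; the sign of moving `ψ̄_j` past `η` cancels the sign of the graded
Leibniz rule. On the Schwartz factor, differentiation under the integral sign gives
`∂/∂b_k f̂ = i (z^k f)^`, and the same factor `i` appears on both sides.
-/

namespace GrassmannFourier

open CliffordAlgebra (contractLeft involute)

local infixl:75 "⌋" => contractLeft

section Semiring

variable {A κ : Type*} [Semiring A]

lemma sum_pow_card_add_one_eq_zero (s : Finset κ) (a : κ → A)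
    (hcomm : ∀ i j, Commute (a i) (a j)) (hsq : ∀ i, a i ^ 2 = 0) :
    (∑ i ∈ s, a i) ^ (s.card + 1) = 0 := by
  classical
  induction s using Finset.induction_on with
  | empty => simp
  | insert i s hi ih =>
    rw [Finset.sum_insert hi, Finset.card_insert_of_notMem hi]
    have hi_comm : Commute (a i) (∑ j ∈ s, a j) := Commute.sum_right _ _ _ fun j _ => hcomm i j
    exact hi_comm.add_pow_eq_zero_of_add_le_succ_of_pow_eq_zero (hsq i) ih (by omega)

end Semiring

section Clifford

variable {R M : Type*} [CommRing R] [AddCommGroup M] [Module R M] {Q : QuadraticForm R M}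
  (d : Module.Dual R M)

lemma contractLeft_mul (x y : CliffordAlgebra Q) :
    d⌋(x * y) = d⌋x * y + involute x * d⌋y := by
  induction x using CliffordAlgebra.left_induction with
  | algebraMap r => simp [CliffordAlgebra.contractLeft_algebraMap_mul]
  | add x₁ x₂ h₁ h₂ => simp only [add_mul, map_add, h₁, h₂]; abel
  | ι_mul x v hx =>
    simp only [mul_assoc, CliffordAlgebra.contractLeft_ι_mul, hx, map_mul,
      CliffordAlgebra.involute_ι, mul_add, sub_mul, smul_mul_assoc, neg_mul]
    abel

lemma contractLeft_pow_succ {x : CliffordAlgebra Q} (hx : involute x = x)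
    (hcomm : Commute x (d⌋x)) (m : ℕ) :
    d⌋(x ^ (m + 1)) = (m + 1) • (d⌋x * x ^ m) := by
  induction m with
  | zero => simp
  | succ m ih =>
    rw [pow_succ', contractLeft_mul, ih, hx, mul_smul_comm, ← mul_assoc, hcomm.eq, mul_assoc,
      ← pow_succ', succ_nsmul' _ (m + 1)]

lemma contractLeft_exp [Module ℚ (CliffordAlgebra Q)] {x : CliffordAlgebra Q}
    (hnil : IsNilpotent x) (hx : involute x = x) (hcomm : Commute x (d⌋x)) :
    d⌋(IsNilpotent.exp x) = d⌋x * IsNilpotent.exp x := by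
  obtain ⟨N, hN⟩ := hnil
  have hN' : x ^ (N + 1) = 0 := by rw [pow_succ, hN, zero_mul]
  have hterm (m : ℕ) : d⌋(((m + 1).factorial : ℚ)⁻¹ • x ^ (m + 1)) =
      d⌋x * ((m.factorial : ℚ)⁻¹ • x ^ m) := by
    rw [map_rat_smul, contractLeft_pow_succ d hx hcomm, mul_smul_comm, ← Nat.cast_smul_eq_nsmul ℚ,
      smul_smul, Nat.factorial_succ]
    congr 1
    push_cast
    field_simp
  calc d⌋IsNilpotent.exp x
      = ∑ m ∈ Finset.range (N + 1), d⌋((m.factorial : ℚ)⁻¹ • x ^ m) := by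
        rw [IsNilpotent.exp_eq_sum hN', map_sum]
    _ = ∑ m ∈ Finset.range N, d⌋x * ((m.factorial : ℚ)⁻¹ • x ^ m) := by
        rw [Finset.sum_range_succ']
        simp [hterm]
    _ = d⌋x * IsNilpotent.exp x := by rw [IsNilpotent.exp_eq_sum hN, Finset.mul_sum]

lemma eq_involute (σ : CliffordAlgebra Q →ₗ[R] CliffordAlgebra Q) (hone : σ 1 = 1)
    (hmul : ∀ x y, σ (x * y) = σ x * σ y)
    (hι : ∀ v, σ (CliffordAlgebra.ι Q v) = -CliffordAlgebra.ι Q v) (x : CliffordAlgebra Q) :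
    σ x = involute x := by
  have h : AlgHom.ofLinearMap σ hone hmul = involute := by
    ext v
    simp [hι]
  exact DFunLike.congr_fun h x

lemma eq_contractLeft (D : CliffordAlgebra Q →ₗ[R] CliffordAlgebra Q)
    (hmul : ∀ x y, D (x * y) = D x * y + involute x * D y)
    (hι : ∀ v, D (CliffordAlgebra.ι Q v) = algebraMap R _ (d v)) :
    D = contractLeft d := by
  have hone : D 1 = 0 := by simpa using hmul 1 1
  ext x
  induction x using CliffordAlgebra.left_induction with
  | algebraMap r =>
    rw [Algebra.algebraMap_eq_smul_one, map_smul, map_smul, hone, CliffordAlgebra.contractLeft_one]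
  | add x y hx hy => rw [map_add, map_add, hx, hy]
  | ι_mul x v hx => rw [hmul, contractLeft_mul, hι, hx, CliffordAlgebra.contractLeft_ι]

end Clifford

section Exterior

open ExteriorAlgebra (ι)

variable {R M N : Type*} [CommRing R] [AddCommGroup M] [Module R M] [AddCommGroup N] [Module R N]

lemma ι_mul_eq_involute_mul_ι (v : M) (x : ExteriorAlgebra R M) :
    ι R v * x = involute x * ι R v := by
  induction x using CliffordAlgebra.left_induction with
  | algebraMap r => rw [AlgHom.commutes, Algebra.commutes]
  | add x y hx hy => rw [mul_add, hx, hy, map_add, add_mul]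
  | ι_mul x w hx =>
    have hswap : ι R v * ι R w = -ι R w * ι R v := by
      rw [neg_mul]
      exact eq_neg_of_add_eq_zero_left (ExteriorAlgebra.ι_add_mul_swap v w)
    rw [map_mul, CliffordAlgebra.involute_ι, mul_assoc, ← hx, ← mul_assoc, ← mul_assoc, hswap]

lemma commute_ι_mul_ι (v w : M) (x : ExteriorAlgebra R M) : Commute (ι R v * ι R w) x := by
  rw [commute_iff_eq, mul_assoc, ι_mul_eq_involute_mul_ι w, ← mul_assoc, ι_mul_eq_involute_mul_ι v,
    CliffordAlgebra.involute_involute, mul_assoc]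

lemma ι_mul_ι_sq_eq_zero (v w : M) : (ι R v * ι R w) ^ 2 = 0 := by
  rw [sq, mul_assoc, ← (commute_ι_mul_ι v w _).eq, ← mul_assoc, ← mul_assoc,
    ExteriorAlgebra.ι_sq_zero, zero_mul, zero_mul]

lemma contractLeft_map (f : M →ₗ[R] N) (d : Module.Dual R N) (x : ExteriorAlgebra R M) :
    d⌋(ExteriorAlgebra.map f x) = ExteriorAlgebra.map f ((d ∘ₗ f)⌋x) := by
  induction x using CliffordAlgebra.left_induction with
  | algebraMap r => simp [CliffordAlgebra.contractLeft_algebraMap]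
  | add x y hx hy => simp only [map_add, hx, hy]
  | ι_mul x v hx => simp [CliffordAlgebra.contractLeft_ι_mul, hx]

lemma contractLeft_mem_exteriorPower (d : Module.Dual R M) {k : ℕ} {x : ExteriorAlgebra R M}
    (hx : x ∈ ⋀[R]^(k + 1) M) : d⌋x ∈ ⋀[R]^k M := by
  induction k generalizing x with
  | zero =>
    obtain ⟨v, rfl⟩ : x ∈ (ι R).range := by simpa using hx
    rw [CliffordAlgebra.contractLeft_ι, ExteriorAlgebra.exteriorPower, pow_zero]
    exact Submodule.algebraMap_mem (d v)
  | succ k ih =>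
    rw [ExteriorAlgebra.exteriorPower, pow_succ'] at hx
    induction hx using Submodule.mul_induction_on' with
    | add x _ y _ hx hy => rw [map_add]; exact add_mem hx hy
    | mem_mul_mem u hu y hy =>
      obtain ⟨v, rfl⟩ := hu
      rw [CliffordAlgebra.contractLeft_ι_mul]
      refine sub_mem (Submodule.smul_mem _ _ hy) ?_
      rw [ExteriorAlgebra.exteriorPower, pow_succ']
      exact Submodule.mul_mem_mul ⟨v, rfl⟩ (ih hy)

lemma involute_map (f : M →ₗ[R] N) (x : ExteriorAlgebra R M) :
    involute (ExteriorAlgebra.map f x) = ExteriorAlgebra.map f (involute x) := by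
  suffices h : involute.comp (ExteriorAlgebra.map f) =
      (ExteriorAlgebra.map f).comp involute from DFunLike.congr_fun h x
  ext v
  simp

lemma map_inr_mul_map_inl (v : N) (a : ExteriorAlgebra R M) :
    ExteriorAlgebra.map (.inr R M N) (ι R v) * ExteriorAlgebra.map (.inl R M N) a =
      ExteriorAlgebra.map (.inl R M N) (involute a) * ExteriorAlgebra.map (.inr R M N) (ι R v) := by
  rw [ExteriorAlgebra.map_apply_ι, ι_mul_eq_involute_mul_ι, involute_map]

lemma range_map_inl_mul_range_map_inr :
    (ExteriorAlgebra.map (LinearMap.inl R M N)).toLinearMap.range *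
      (ExteriorAlgebra.map (LinearMap.inr R M N)).toLinearMap.range = ⊤ := by
  refine Submodule.eq_top_iff'.mpr fun x => ?_
  induction x using CliffordAlgebra.left_induction with
  | algebraMap r =>
    rw [Algebra.algebraMap_eq_smul_one, ← mul_one (1 : ExteriorAlgebra R (M × N))]
    exact Submodule.smul_mem _ r (Submodule.mul_mem_mul
      ⟨1, map_one (ExteriorAlgebra.map _)⟩ ⟨1, map_one (ExteriorAlgebra.map _)⟩)
  | add x y hx hy => exact add_mem hx hy
  | ι_mul x v hx =>
    induction hx using Submodule.mul_induction_on' with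
    | add x _ y _ hx hy => rw [mul_add]; exact add_mem hx hy
    | mem_mul_mem _ ha _ hb =>
      obtain ⟨a, rfl⟩ := ha
      obtain ⟨b, rfl⟩ := hb
      have hv : ι R v = ExteriorAlgebra.map (.inl R M N) (ι R v.1) +
          ExteriorAlgebra.map (.inr R M N) (ι R v.2) := by
        simp [← map_add]
      have hsplit :
          ι R v * (ExteriorAlgebra.map (.inl R M N) a * ExteriorAlgebra.map (.inr R M N) b) =
            ExteriorAlgebra.map (.inl R M N) (ι R v.1 * a) * ExteriorAlgebra.map (.inr R M N) b +
              ExteriorAlgebra.map (.inl R M N) (involute a) *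
                ExteriorAlgebra.map (.inr R M N) (ι R v.2 * b) := by
        rw [hv, add_mul, ← mul_assoc, ← mul_assoc, map_inr_mul_map_inl, map_mul, map_mul,
          mul_assoc (ExteriorAlgebra.map _ (involute a))]
      exact hsplit ▸ add_mem (Submodule.mul_mem_mul ⟨_, rfl⟩ ⟨_, rfl⟩)
        (Submodule.mul_mem_mul ⟨_, rfl⟩ ⟨_, rfl⟩)

lemma exteriorPower_eq_bot {n k : ℕ} (hk : n < k) {v : Fin n → M}
    (hv : Submodule.span R (Set.range v) = ⊤) : ⋀[R]^k M = ⊥ := by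
  rw [← exteriorPower.ιMulti_family_span_fixedDegree_of_span R hv, Submodule.span_eq_bot]
  rintro _ ⟨s, rfl⟩
  have hcard := Finset.card_le_univ s.1
  rw [Fintype.card_fin, s.2] at hcard
  omega

lemma exteriorPower_eq_span_ιMulti {n : ℕ} {v : Fin n → M}
    (hv : Submodule.span R (Set.range v) = ⊤) :
    ⋀[R]^n M = Submodule.span R {ExteriorAlgebra.ιMulti R n v} := by
  let full : Set.powersetCard (Fin n) n := Set.powersetCard.ofFinEmbEquiv (RelEmbedding.refl _)
  have eq_full (s : Set.powersetCard (Fin n) n) : s = full := by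
    have eq_univ (t : Set.powersetCard (Fin n) n) : t.1 = Finset.univ :=
      Finset.eq_univ_of_card _ (by rw [Fintype.card_fin]; exact t.2)
    exact Subtype.ext ((eq_univ s).trans (eq_univ full).symm)
  have hfamily (s : Set.powersetCard (Fin n) n) :
      ExteriorAlgebra.ιMulti_family R n v s = ExteriorAlgebra.ιMulti R n v := by
    rw [eq_full s, ExteriorAlgebra.ιMulti_family, Equiv.symm_apply_apply]
    rfl
  have : Nonempty (Set.powersetCard (Fin n) n) := ⟨full⟩
  rw [← exteriorPower.ιMulti_family_span_fixedDegree_of_span R hv, Set.range_eq_singleton hfamily]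

end Exterior

section Berezin

open ExteriorAlgebra (ι)

variable {n : ℕ}

/-- The embedding of `Lam n` as the first factor of `Egr n`, the companion of `emb2`. -/
def emb1 (n : ℕ) : Lam n →ₐ[ℂ] Egr n :=
  ExteriorAlgebra.map (LinearMap.inl ℂ (Fin n → ℂ) (Fin n → ℂ))

/-- The functional dual to the generator `ψ^j`; contraction with it is the operator `ι_j`. -/
def lamDual (n : ℕ) (j : Fin n) : Module.Dual ℂ (Fin n → ℂ) := LinearMap.proj j

/-- The functional dual to `ψ^j` on the generators of `Egr n`; contraction with it is the
Grassmann derivative `∂/∂ψ^j`. -/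
def psvDual (n : ℕ) (j : Fin n) : Module.Dual ℂ ((Fin n → ℂ) × (Fin n → ℂ)) :=
  lamDual n j ∘ₗ LinearMap.snd ℂ (Fin n → ℂ) (Fin n → ℂ)

lemma emb2_eq_map : emb2 n = ExteriorAlgebra.map (LinearMap.inr ℂ (Fin n → ℂ) (Fin n → ℂ)) := by
  ext v
  simp [emb2]

lemma ι_eq_sum_smul_lamGen (v : Fin n → ℂ) : ι ℂ v = ∑ a, v a • lamGen n a := by
  simp only [lamGen, ← map_smul, ← map_sum]
  rw [← pi_eq_sum_univ' v]

lemma emb1_lamGen (a : Fin n) : emb1 n (lamGen n a) = psb n a := by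
  simp [emb1, lamGen, psb]

lemma emb2_lamGen (a : Fin n) : emb2 n (lamGen n a) = psv n a := by
  simp [emb2, lamGen, psv]

lemma proj1_psb (a : Fin n) : proj1 n (psb n a) = lamGen n a := by
  simp [proj1, psb, lamGen]

lemma emb1_mem_algD (x : Lam n) : emb1 n x ∈ AlgD n := by
  induction x using CliffordAlgebra.left_induction with
  | algebraMap r => rw [AlgHom.commutes]; exact Subalgebra.algebraMap_mem _ r
  | add x y hx hy => rw [map_add]; exact add_mem hx hy
  | ι_mul x v hx =>
    rw [map_mul]
    refine mul_mem ?_ hx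
    change emb1 n (ι ℂ v) ∈ _
    simp only [ι_eq_sum_smul_lamGen, map_sum, map_smul, emb1_lamGen]
    exact sum_mem fun a _ =>
      Subalgebra.smul_mem _ (Algebra.subset_adjoin (Set.mem_range_self a)) _

lemma emb2_mem_PV_pow {k : ℕ} {y : Lam n} (hy : y ∈ ⋀[ℂ]^k (Fin n → ℂ)) :
    emb2 n y ∈ PV n ^ k := by
  suffices h : (ι ℂ).range.map (emb2 n).toLinearMap ≤ PV n from
    pow_le_pow_left' h k (Submodule.map_pow _ (emb2 n) k ▸ Submodule.mem_map_of_mem hy)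
  rintro _ ⟨_, ⟨v, rfl⟩, rfl⟩
  simp only [ι_eq_sum_smul_lamGen, AlgHom.toLinearMap_apply, map_sum, map_smul, emb2_lamGen]
  exact sum_mem fun a _ => Submodule.smul_mem _ _ (Submodule.subset_span (Set.mem_range_self a))

lemma emb2_ιMulti_basisFun :
    emb2 n (ExteriorAlgebra.ιMulti ℂ n (Pi.basisFun ℂ (Fin n))) = psvTop n := by
  simp only [ExteriorAlgebra.ιMulti_apply, map_list_prod, List.map_ofFn, psvTop,
    ← List.ofFn_eq_map, Pi.basisFun_apply]
  congr 2
  exact funext emb2_lamGen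

lemma emb1_mul_emb2_induction {p : Egr n → Prop} (add : ∀ x y, p x → p y → p (x + y))
    (mul : ∀ a y, p (emb1 n a * emb2 n y)) (x : Egr n) : p x := by
  have hx : x ∈ (emb1 n).toLinearMap.range * (emb2 n).toLinearMap.range := by
    rw [emb2_eq_map, emb1, range_map_inl_mul_range_map_inr]
    trivial
  induction hx using Submodule.mul_induction_on' with
  | mem_mul_mem _ ha _ hy =>
    obtain ⟨a, rfl⟩ := ha
    obtain ⟨y, rfl⟩ := hy
    exact mul a y
  | add x _ y _ hx hy => exact add x y hx hy

/-- `Ber` is the Berezin integral `∫dψ`, linear over the unintegrated factor `AlgD n`. -/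
structure IsBerezinIntegral (n : ℕ) (Ber : Egr n →ₗ[ℂ] Egr n) : Prop where
  mul_psvTop : ∀ ξ ∈ AlgD n, Ber (ξ * psvTop n) = ξ
  mul_low : ∀ ξ ∈ AlgD n, ∀ k < n, ∀ y ∈ PV n ^ k, Ber (ξ * y) = 0

namespace IsBerezinIntegral

variable {Ber : Egr n →ₗ[ℂ] Egr n} (hBer : IsBerezinIntegral n Ber)
include hBer

lemma exists_eq_smul (y : Lam n) : ∃ c : ℂ, ∀ a, Ber (emb1 n a * emb2 n y) = c • emb1 n a := by
  induction y using DirectSum.Decomposition.inductionOn (fun k => ⋀[ℂ]^k (Fin n → ℂ)) with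
  | zero => exact ⟨0, by simp⟩
  | add y z hy hz =>
    obtain ⟨b, hb⟩ := hy
    obtain ⟨c, hc⟩ := hz
    exact ⟨b + c, fun a => by rw [map_add, mul_add, map_add, hb, hc, add_smul]⟩
  | @homogeneous k y =>
    obtain ⟨y, hy⟩ := y
    rcases lt_trichotomy k n with hk | rfl | hk
    · exact ⟨0, fun a => by
        rw [hBer.mul_low _ (emb1_mem_algD a) k hk _ (emb2_mem_PV_pow hy), zero_smul]⟩
    · rw [exteriorPower_eq_span_ιMulti (Pi.basisFun ℂ (Fin k)).span_eq] at hy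
      obtain ⟨c, rfl⟩ := Submodule.mem_span_singleton.mp hy
      exact ⟨c, fun a => by
        rw [map_smul, mul_smul_comm, map_smul, emb2_ιMulti_basisFun,
          hBer.mul_psvTop _ (emb1_mem_algD a)]⟩
    · rw [exteriorPower_eq_bot hk (Pi.basisFun ℂ (Fin n)).span_eq, Submodule.mem_bot] at hy
      exact ⟨0, by simp [hy]⟩

lemma map_emb1_mul (a : Lam n) (x : Egr n) : Ber (emb1 n a * x) = emb1 n a * Ber x := by
  induction x using emb1_mul_emb2_induction with
  | add x y hx hy => rw [mul_add, map_add, hx, hy, map_add, mul_add]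
  | mul b y =>
    obtain ⟨c, hc⟩ := hBer.exists_eq_smul y
    rw [← mul_assoc, ← map_mul, hc, hc, map_mul, mul_smul_comm]

lemma map_emb1_mul_emb2_contractLeft (j : Fin n) (a y : Lam n) :
    Ber (emb1 n a * emb2 n (lamDual n j⌋y)) = 0 := by
  induction y using DirectSum.Decomposition.inductionOn (fun k => ⋀[ℂ]^k (Fin n → ℂ)) with
  | zero => simp
  | add y z hy hz => simp only [map_add, mul_add, hy, hz, add_zero]
  | @homogeneous k y =>
    obtain ⟨y, hy⟩ := y
    rcases k with _ | k
    · obtain ⟨r, rfl⟩ : ∃ r, algebraMap ℂ (Lam n) r = y := by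
        rwa [ExteriorAlgebra.exteriorPower, pow_zero, Submodule.mem_one] at hy
      rw [CliffordAlgebra.contractLeft_algebraMap, map_zero, mul_zero, map_zero]
    · by_cases hk : k < n
      · exact hBer.mul_low _ (emb1_mem_algD a) k hk _
          (emb2_mem_PV_pow (contractLeft_mem_exteriorPower _ hy))
      · rw [exteriorPower_eq_bot (by omega) (Pi.basisFun ℂ (Fin n)).span_eq,
          Submodule.mem_bot] at hy
        simp [hy]

end IsBerezinIntegral

lemma contractLeft_emb1 (j : Fin n) (a : Lam n) : psvDual n j⌋emb1 n a = 0 := by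
  rw [emb1, contractLeft_map, psvDual, LinearMap.comp_assoc, LinearMap.snd_comp_inl]
  simp

lemma contractLeft_emb2 (j : Fin n) (y : Lam n) :
    psvDual n j⌋emb2 n y = emb2 n (lamDual n j⌋y) := by
  rw [emb2_eq_map, contractLeft_map, psvDual, LinearMap.comp_assoc, LinearMap.snd_comp_inr,
    LinearMap.comp_id]

lemma IsBerezinIntegral.map_contractLeft {Ber : Egr n →ₗ[ℂ] Egr n} (hBer : IsBerezinIntegral n Ber)
    (j : Fin n) (x : Egr n) : Ber (psvDual n j⌋x) = 0 := by
  induction x using emb1_mul_emb2_induction with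
  | add x y hx hy => rw [map_add, map_add, hx, hy, add_zero]
  | mul a y =>
    rw [contractLeft_mul, contractLeft_emb1, contractLeft_emb2, zero_mul, zero_add, emb1,
      involute_map]
    exact hBer.map_emb1_mul_emb2_contractLeft j _ y

/-- The exponent `i ψ̄_j ψ^j` of `fourierKernel`. -/
def fourierPhase (n : ℕ) : Egr n := Complex.I • ∑ j, psb n j * psv n j

lemma fourierPhase_pow_eq_zero : fourierPhase n ^ (n + 1) = 0 := by
  have h := sum_pow_card_add_one_eq_zero Finset.univ (fun j => psb n j * psv n j)
    (fun i j => commute_ι_mul_ι _ _ _) (fun j => ι_mul_ι_sq_eq_zero _ _)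
  rw [Finset.card_univ, Fintype.card_fin] at h
  rw [fourierPhase, smul_pow, h, smul_zero]

lemma fourierKernel_eq_exp : fourierKernel n = IsNilpotent.exp (fourierPhase n) := by
  rw [IsNilpotent.exp_eq_sum fourierPhase_pow_eq_zero, fourierKernel]
  exact Finset.sum_congr rfl fun m _ => inv_natCast_smul_eq ..

lemma involute_fourierPhase : involute (fourierPhase n) = fourierPhase n := by
  simp [fourierPhase, psb, psv]

lemma commute_fourierPhase (x : Egr n) : Commute (fourierPhase n) x :=
  (Commute.sum_left _ _ _ fun _ _ => commute_ι_mul_ι _ _ x).smul_left _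

lemma contractLeft_fourierPhase (j : Fin n) :
    psvDual n j⌋fourierPhase n = -(Complex.I • psb n j) := by
  have hterm (i : Fin n) :
      psvDual n j⌋(psb n i * psv n i) = -(if j = i then psb n i else 0) := by
    rw [psb, psv, CliffordAlgebra.contractLeft_ι_mul, CliffordAlgebra.contractLeft_ι]
    simp [psvDual, lamDual, Pi.single_apply]
  simp [fourierPhase, hterm]

lemma contractLeft_fourierKernel (j : Fin n) :
    psvDual n j⌋fourierKernel n = -(Complex.I • (psb n j * fourierKernel n)) := by
  rw [fourierKernel_eq_exp, contractLeft_exp _ ⟨_, fourierPhase_pow_eq_zero⟩ involute_fourierPhase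
    (commute_fourierPhase _), contractLeft_fourierPhase, neg_mul, smul_mul_assoc]

lemma IsBerezinIntegral.grFourierL_contractLeft {Ber : Egr n →ₗ[ℂ] Egr n}
    (hBer : IsBerezinIntegral n Ber) (j : Fin n) (η : Lam n) :
    grFourierL n Ber (lamDual n j⌋η) = Complex.I • (lamGen n j * grFourierL n Ber η) := by
  set K := fourierKernel n
  set η' := emb2 n (lamDual n j⌋η)
  have hparts := hBer.map_contractLeft j (emb2 n η * K)
  have hBerη : Ber (η' * K) = Complex.I • (psb n j * Ber (emb2 n η * K)) := by
    have hmove : involute (emb2 n η) * (psb n j * K) = emb1 n (lamGen n j) * (emb2 n η * K) := by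
      rw [← mul_assoc, psb, ← ι_mul_eq_involute_mul_ι, mul_assoc, emb1_lamGen, psb]
    rw [contractLeft_mul, contractLeft_emb2, contractLeft_fourierKernel, mul_neg, mul_smul_comm,
      hmove, ← sub_eq_add_neg, map_sub, map_smul, hBer.map_emb1_mul, emb1_lamGen] at hparts
    exact sub_eq_zero.mp hparts
  change proj1 n (Ber (η' * K)) = Complex.I • (lamGen n j * proj1 n (Ber (emb2 n η * K)))
  rw [hBerη, map_smul, map_mul, proj1_psb]

end Berezin

section FourierDerivative

open MeasureTheory

variable {V W E : Type*} [NormedAddCommGroup V] [NormedSpace ℝ V] [MeasurableSpace V]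
  [BorelSpace V] [SecondCountableTopology V] [NormedAddCommGroup W] [NormedSpace ℝ W]
  [NormedAddCommGroup E] [NormedSpace ℂ E] {μ : Measure V} (L : V →L[ℝ] W →L[ℝ] ℝ) {f : V → E}

lemma integrable_fourierSMulRight (hf : AEStronglyMeasurable f μ)
    (hf' : Integrable (fun v => ‖v‖ * ‖f v‖) μ) :
    Integrable (VectorFourier.fourierSMulRight L f) μ :=
  (hf'.const_mul (2 * Real.pi * ‖L‖)).mono' hf.fourierSMulRight <| .of_forall fun v => by
    rw [← mul_assoc]
    exact VectorFourier.norm_fourierSMulRight_le L f v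

lemma fderiv_fourierIntegral_apply (hf : Integrable f μ)
    (hf' : Integrable (fun v => ‖v‖ * ‖f v‖) μ) (w u : W) :
    fderiv ℝ (VectorFourier.fourierIntegral Real.fourierChar μ L.toLinearMap₁₂ f) w u =
      VectorFourier.fourierIntegral Real.fourierChar μ L.toLinearMap₁₂
        (fun v => -(2 * Real.pi * Complex.I) • L v u • f v) w := by
  rw [(VectorFourier.hasFDerivAt_fourierIntegral L hf hf' w).fderiv,
    Real.fourierIntegral_continuousLinearMap_apply'
      (integrable_fourierSMulRight L hf.aestronglyMeasurable hf')]
  rfl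

end FourierDerivative

section SchwartzFourier

open MeasureTheory

variable {n : ℕ}

/-- The pairing turning Mathlib's character `e^{-2πi L(z, b)}` into `e^{i⟨b, z⟩}`. -/
def physPairing (n : ℕ) : (Fin n → ℝ) →L[ℝ] (Fin n → ℝ) →L[ℝ] ℝ :=
  -(2 * Real.pi)⁻¹ • (dotProductBilin ℝ ℝ).toContinuousBilinearMap

lemma physPairing_apply (z b : Fin n → ℝ) :
    physPairing n z b = -(2 * Real.pi)⁻¹ * ∑ j, z j * b j := rfl

lemma fourierChar_neg_physPairing (z b : Fin n → ℝ) :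
    (Real.fourierChar (-physPairing n z b) : ℂ) =
      Complex.exp (Complex.I * ∑ j, (b j : ℂ) * (z j : ℂ)) := by
  have hπ : (Real.pi : ℂ) ≠ 0 := by exact_mod_cast Real.pi_ne_zero
  rw [Real.fourierChar_apply, physPairing_apply]
  congr 1
  push_cast
  simp only [mul_comm (b _ : ℂ)]
  field_simp

lemma fourierIntegral_physPairing (f : (Fin n → ℝ) → ℂ) (b : Fin n → ℝ) :
    VectorFourier.fourierIntegral Real.fourierChar volume (physPairing n).toLinearMap₁₂ f b =
      ∫ z : Fin n → ℝ, Complex.exp (Complex.I * ∑ j, (b j : ℂ) * (z j : ℂ)) * f z := by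
  simp only [← fourierChar_neg_physPairing]
  rfl

/-- Multiplication by the coordinate function `z^k` on Schwartz space. -/
def mulCoord (n : ℕ) (k : Fin n) : Sch n →ₗ[ℂ] Sch n :=
  (SchwartzMap.smulLeftCLM ℂ fun z : Fin n → ℝ => (z k : ℂ)).toLinearMap

lemma mulCoord_apply (k : Fin n) (f : Sch n) (z : Fin n → ℝ) : mulCoord n k f z = z k * f z := by
  have hz : Function.HasTemperateGrowth fun z : Fin n → ℝ => (z k : ℂ) :=
    (Complex.ofRealCLM ∘L .proj (R := ℝ) (φ := fun _ : Fin n => ℝ) k).hasTemperateGrowth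
  exact SchwartzMap.smulLeftCLM_apply_apply hz f z

lemma fderiv_fourier_single {FT : Sch n →ₗ[ℂ] Sch n}
    (hFT : ∀ (f : Sch n) (b : Fin n → ℝ),
      FT f b = ∫ z : Fin n → ℝ, Complex.exp (Complex.I * ∑ j, (b j : ℂ) * (z j : ℂ)) * f z)
    (f : Sch n) (b : Fin n → ℝ) (k : Fin n) :
    fderiv ℝ (FT f) b (Pi.single k 1) = (Complex.I • FT (mulCoord n k f)) b := by
  have hπ : (Real.pi : ℂ) ≠ 0 := by exact_mod_cast Real.pi_ne_zero
  have hFT' (g : Sch n) : FT g = VectorFourier.fourierIntegral Real.fourierChar volume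
      (physPairing n).toLinearMap₁₂ g :=
    funext fun b => (hFT g b).trans (fourierIntegral_physPairing g b).symm
  have hmoment : Integrable (fun z : Fin n → ℝ => ‖z‖ * ‖f z‖) := by
    simpa only [pow_one] using f.integrable_pow_mul volume 1
  have hcoord (z : Fin n → ℝ) : -(2 * Real.pi * Complex.I) • physPairing n z (Pi.single k 1) • f z =
      (Complex.I • mulCoord n k f) z := by
    rw [smul_apply, mulCoord_apply, physPairing_apply]
    simp only [Pi.single_apply, mul_ite, mul_one, mul_zero, Finset.sum_ite_eq', Finset.mem_univ,
      if_true, Complex.real_smul, smul_eq_mul]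
    push_cast
    field_simp
  rw [hFT', fderiv_fourierIntegral_apply _ f.integrable hmoment, funext hcoord, ← hFT', map_smul]

end SchwartzFourier

section Identification

open ExteriorAlgebra (ι)

variable {n : ℕ}

lemma eq_contractLeft_lamDual {σ : Lam n →ₗ[ℂ] Lam n} (hσ_mul : ∀ x y, σ (x * y) = σ x * σ y)
    (hσ_one : σ 1 = 1) (hσ_gen : ∀ i, σ (lamGen n i) = -lamGen n i) {j : Fin n}
    {D : Lam n →ₗ[ℂ] Lam n} (hD_mul : ∀ x y, D (x * y) = D x * y + σ x * D y)
    (hD_gen : ∀ i, D (lamGen n i) = if i = j then 1 else 0) :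
    D = contractLeft (lamDual n j) := by
  have hσ (x : Lam n) : σ x = involute x := by
    refine eq_involute σ hσ_one hσ_mul (fun v => ?_) x
    change σ (ι ℂ v) = -ι ℂ v
    simp only [ι_eq_sum_smul_lamGen v, map_sum, map_smul, hσ_gen, smul_neg, Finset.sum_neg_distrib]
  refine eq_contractLeft _ D (fun x y => by rw [hD_mul, hσ]) fun v => ?_
  change D (ι ℂ v) = _
  simp [lamDual, ι_eq_sum_smul_lamGen v, hD_gen, Algebra.algebraMap_eq_smul_one]

lemma eq_sum_smul_mulCoord {g : Sch n →ₗ[ℂ] Sch n} {c : Fin n → ℂ}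
    (hg : ∀ (f : Sch n) (z : Fin n → ℝ), g f z = (∑ k, c k * (z k : ℂ)) * f z) (f : Sch n) :
    g f = ∑ k, c k • mulCoord n k f := by
  ext z
  simp [hg, mulCoord_apply, Finset.sum_mul, mul_assoc]

end Identification

end GrassmannFourier

open GrassmannFourier in
theorem statement10_general {n : ℕ} (X : Matrix (Fin n) (Fin n) ℂ)
    (Ber : Egr n →ₗ[ℂ] Egr n)
    (hBer_top : ∀ ξ ∈ AlgD n, Ber (ξ * psvTop n) = ξ)
    (hBer_low : ∀ ξ ∈ AlgD n, ∀ k < n, ∀ y ∈ ((PV n) ^ k : Submodule ℂ (Egr n)),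
      Ber (ξ * y) = 0)
    (FT : Sch n →ₗ[ℂ] Sch n)
    (hFT : ∀ (f : Sch n) (b : Fin n → ℝ),
      FT f b = ∫ z : Fin n → ℝ, Complex.exp (Complex.I * ∑ j, (b j : ℂ) * (z j : ℂ)) * f z)
    (mulZ : Fin n → Sch n →ₗ[ℂ] Sch n)
    (hmulZ : ∀ j (f : Sch n) (z : Fin n → ℝ),
      mulZ j f z = (∑ k, X j k * (z k : ℂ)) * f z)
    (pdb : Fin n → Sch n →ₗ[ℂ] Sch n)
    (hpdb : ∀ k (f : Sch n) (b : Fin n → ℝ), pdb k f b = fderiv ℝ (⇑f) b (Pi.single k 1))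
    (σΛ : Lam n →ₗ[ℂ] Lam n) (hσ_mul : ∀ x y, σΛ (x * y) = σΛ x * σΛ y)
    (hσ_one : σΛ 1 = 1) (hσ_gen : ∀ i, σΛ (lamGen n i) = -lamGen n i)
    (ctd : Fin n → Lam n →ₗ[ℂ] Lam n)
    (hctd_der : ∀ j x y, ctd j (x * y) = ctd j x * y + σΛ x * ctd j y)
    (hctd_gen : ∀ j i, ctd j (lamGen n i) = if i = j then 1 else 0) :
    ∀ w : Sch n ⊗[ℂ] Lam n,
      TensorProduct.map FT (grFourierL n Ber) (iotaXi n mulZ ctd w)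
        = (∑ j, ∑ k, X j k •
            TensorProduct.map (pdb k) (LinearMap.mulLeft ℂ (lamGen n j)))
            (TensorProduct.map FT (grFourierL n Ber) w) := by
  have hBer : IsBerezinIntegral n Ber := ⟨hBer_top, hBer_low⟩
  have hctd j : ctd j = CliffordAlgebra.contractLeft (lamDual n j) :=
    eq_contractLeft_lamDual hσ_mul hσ_one hσ_gen (hctd_der j) (hctd_gen j)
  have hderiv k f : pdb k (FT f) = Complex.I • FT (mulCoord n k f) :=
    SchwartzMap.ext fun b => (hpdb k _ b).trans (fderiv_fourier_single hFT f b k)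
  intro w
  induction w using TensorProduct.induction_on with
  | zero => simp only [map_zero]
  | add v w hv hw => simp only [map_add, hv, hw]
  | tmul f η =>
    simp only [iotaXi, LinearMap.sum_apply, LinearMap.smul_apply, map_sum, TensorProduct.map_tmul,
      LinearMap.mulLeft_apply]
    refine Finset.sum_congr rfl fun j _ => ?_
    calc FT (mulZ j f) ⊗ₜ[ℂ] grFourierL n Ber (ctd j η)
        = (∑ k, X j k • FT (mulCoord n k f)) ⊗ₜ
            (Complex.I • (lamGen n j * grFourierL n Ber η)) := by
          simp only [hctd, hBer.grFourierL_contractLeft, eq_sum_smul_mulCoord (hmulZ j), map_sum,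
            map_smul]
      _ = ∑ k, X j k • ((Complex.I • FT (mulCoord n k f)) ⊗ₜ
            (lamGen n j * grFourierL n Ber η)) := by
          simp only [TensorProduct.sum_tmul, TensorProduct.smul_tmul, TensorProduct.tmul_smul,
            Finset.smul_sum, smul_comm Complex.I (X j _)]
      _ = ∑ k, X j k • (pdb k (FT f) ⊗ₜ (lamGen n j * grFourierL n Ber η)) := by
          simp only [hderiv]

theorem statement10 {n : ℕ} (X : Matrix (Fin n) (Fin n) ℝ)
    -- the Berezin integral defining the Grassmann Fourier transform
    (Ber : Egr n →ₗ[ℂ] Egr n)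
    (hBer_top : ∀ ξ ∈ AlgD n, Ber (ξ * psvTop n) = ξ)
    (hBer_low : ∀ ξ ∈ AlgD n, ∀ k < n, ∀ y ∈ ((PV n) ^ k : Submodule ℂ (Egr n)),
      Ber (ξ * y) = 0)
    -- the Fourier transform f̂(b) = ∫ f(z) e^{i⟨b,z⟩} dz on Schwartz space
    (FT : Sch n →ₗ[ℂ] Sch n)
    (hFT : ∀ (f : Sch n) (b : Fin n → ℝ),
      FT f b = ∫ z : Fin n → ℝ, Complex.exp (Complex.I * ∑ j, (b j : ℂ) * (z j : ℂ)) * f z)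
    -- multiplication by the components X^j_k z^k of the vector field
    (mulZ : Fin n → Sch n →ₗ[ℂ] Sch n)
    (hmulZ : ∀ j (f : Sch n) (z : Fin n → ℝ),
      mulZ j f z = (∑ k, (X j k : ℂ) * (z k : ℂ)) * f z)
    -- the partial derivatives ∂/∂b_k on the dual Schwartz space
    (pdb : Fin n → Sch n →ₗ[ℂ] Sch n)
    (hpdb : ∀ k (f : Sch n) (b : Fin n → ℝ), pdb k f b = fderiv ℝ (⇑f) b (Pi.single k 1))
    -- the parity involution of Λ and the contractions ι_j dual to the generators ψ^j
    (σΛ : Lam n →ₗ[ℂ] Lam n) (hσ_mul : ∀ x y, σΛ (x * y) = σΛ x * σΛ y)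
    (hσ_one : σΛ 1 = 1) (hσ_gen : ∀ i, σΛ (lamGen n i) = -lamGen n i)
    (ctd : Fin n → Lam n →ₗ[ℂ] Lam n)
    (hctd_der : ∀ j x y, ctd j (x * y) = ctd j x * y + σΛ x * ctd j y)
    (hctd_gen : ∀ j i, ctd j (lamGen n i) = if i = j then 1 else 0) :
    -- Conclusion: 𝓕(ι_ξ w) = Σ_{j,k} X^j_k (∂/∂b_k ⊗ ψ̄_j ∧ ·) (𝓕 w).
    ∀ w : Sch n ⊗[ℂ] Lam n,
      TensorProduct.map FT (grFourierL n Ber) (iotaXi n mulZ ctd w)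
        = (∑ j, ∑ k, (X j k : ℂ) •
            TensorProduct.map (pdb k) (LinearMap.mulLeft ℂ (lamGen n j)))
            (TensorProduct.map FT (grFourierL n Ber) w) :=
  statement10_general (X.map (↑)) Ber hBer_top hBer_low FT hFT mulZ hmulZ pdb hpdb σΛ hσ_mul hσ_one
    hσ_gen ctd hctd_der hctd_gen
end
end
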